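/- Let α be a simple root with α ∈ ℤΓ, and assume: (i) ⟨α^∨, λ⟩ is even for every λ ∈ F; (ii) for every λ ∈ F with λ^#(2α) > 0, the restriction of α^∨ to ℤΓ is a positive rational multiple of λ^#. Then there is a unique λ ∈ F with λ^#(α) > 0, the restriction of α^∨ to ℤΓ equals 2λ^#, and a(α) = {λ^#} has exactly one element. -/

import Mathlib

open scoped RealInnerProductSpace

/-- The Cartan pairing `⟨α^∨, x⟩ = 2(α,x)/(α,α)`. -/
noncomputable def cpair {V : Type*} [NormedAddCommGroup V] [InnerProductSpace ℝ V]
    (α x : V) : ℝ :=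
  2 * ⟪α, x⟫ / ⟪α, α⟫

/-- A finite reduced crystallographic root system `Φ` in `V`, together with a fixed base `S`
(the set of simple roots): every root is a nonnegative or nonpositive integer combination of
simple roots. -/
structure BasedRootSystem (V : Type*) [NormedAddCommGroup V] [InnerProductSpace ℝ V] where
  Φ : Set V
  S : Set V
  finite : Φ.Finite
  ne_zero : ∀ α ∈ Φ, α ≠ 0
  neg_mem : ∀ α ∈ Φ, -α ∈ Φ
  reflect_mem : ∀ α ∈ Φ, ∀ β ∈ Φ, β - cpair α β • α ∈ Φ
  pairing_int : ∀ α ∈ Φ, ∀ β ∈ Φ, ∃ n : ℤ, cpair α β = n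
  reduced : ∀ α ∈ Φ, ∀ t : ℝ, t • α ∈ Φ → t = 1 ∨ t = -1
  base_subset : S ⊆ Φ
  base_indep : LinearIndependent ℝ ((↑) : S → V)
  pos_or_neg : ∀ β ∈ Φ,
      (∃ (t : Finset V) (c : V → ℕ), ↑t ⊆ S ∧ β = ∑ s ∈ t, (c s : ℝ) • s) ∨
      (∃ (t : Finset V) (c : V → ℕ), ↑t ⊆ S ∧ -β = ∑ s ∈ t, (c s : ℝ) • s)

/-- `β` is a positive root: a root which is a nonnegative integer combination of the
simple roots. -/
def BasedRootSystem.IsPositiveRoot {V : Type*} [NormedAddCommGroup V] [InnerProductSpace ℝ V]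
    (R : BasedRootSystem V) (β : V) : Prop :=
  β ∈ R.Φ ∧ ∃ (t : Finset V) (c : V → ℕ), ↑t ⊆ R.S ∧ β = ∑ s ∈ t, (c s : ℝ) • s

/-- `lam` is a dominant weight: `⟨β^∨, lam⟩` is a nonnegative integer for every simple
root `β`. -/
def BasedRootSystem.IsDominant {V : Type*} [NormedAddCommGroup V] [InnerProductSpace ℝ V]
    (R : BasedRootSystem V) (lam : V) : Prop :=
  ∀ β ∈ R.S, ∃ n : ℕ, cpair β lam = n

/-- The set `a(α) = {δ ∈ Hom(ℤΓ, ℤ) : δ(α) = 1 and (δ ∈ {λ^#} or α^∨|_{ℤΓ} - δ ∈ {λ^#})}`,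
where `lsharp` is the dual basis of `F` and `acheck` is the restriction `α^∨|_{ℤΓ}` of the
coroot of `α` to `ℤΓ`. -/
def aSet {V : Type*} [NormedAddCommGroup V] [InnerProductSpace ℝ V] (F : Finset V)
    (lsharp : V → (Submodule.span ℤ (F : Set V) →ₗ[ℤ] ℤ))
    (acheck : Submodule.span ℤ (F : Set V) →ₗ[ℤ] ℤ)
    (α : V) (hα : α ∈ Submodule.span ℤ (F : Set V)) :
    Set (Submodule.span ℤ (F : Set V) →ₗ[ℤ] ℤ) :=
  {δ | δ ⟨α, hα⟩ = 1 ∧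
    ((∃ lam ∈ F, δ = lsharp lam) ∨ (∃ lam ∈ F, acheck - δ = lsharp lam))}

/-!
Expanding `α` in the basis `F` gives `2 = ⟨α^∨, α⟩ = ∑ λ^#(α) ⟨α^∨, λ⟩`. Every `⟨α^∨, λ⟩` is
nonnegative, so some `λ^#(α)` is positive, and then `α^∨` is a multiple of `λ^#`. The factor is
`⟨α^∨, λ⟩`, so `⟨α^∨, λ⟩ λ^#(α) = 2`; evenness forces `⟨α^∨, λ⟩ = 2` and `λ^#(α) = 1`. The index
`λ` is unique because a nonzero functional is a multiple of at most one coordinate.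
-/

open Module

section Coordinates

variable {ι R M : Type*} [CommRing R] [AddCommGroup M] [Module R M]

theorem exists_coord_pos_of_apply_pos [LinearOrder R] [IsOrderedRing R]
    (b : Basis ι R M) {f : M →ₗ[R] R} {x : M} (hf : ∀ i, 0 ≤ f (b i)) (hx : 0 < f x) :
    ∃ i, 0 < b.coord i x := by
  by_contra! hcoord
  have hexpand : f x = ∑ i ∈ (b.repr x).support, b.coord i x * f (b i) := by
    conv_lhs => rw [← b.linearCombination_repr x]
    simp [Finsupp.linearCombination_apply, Finsupp.sum]
  refine hx.not_ge (hexpand.trans_le (Finset.sum_nonpos fun i _ ↦ ?_))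
  exact mul_nonpos_of_nonpos_of_nonneg (hcoord i) (hf i)

theorem eq_smul_coord_of_map_eq_mul {K : Type*} [Semiring K] {φ : R →+* K}
    (hφ : Function.Injective φ) (b : Basis ι R M) {f : M →ₗ[R] R} {i : ι} {q : K}
    (h : ∀ y, φ (f y) = q * φ (b.coord i y)) : f = f (b i) • b.coord i := by
  have hq : φ (f (b i)) = q := by simpa using h (b i)
  ext y
  apply hφ
  rw [h, ← hq, LinearMap.smul_apply, smul_eq_mul, map_mul]

theorem index_eq_of_smul_coord_eq (b : Basis ι R M) {i j : ι} {r s : R} (hr : r ≠ 0)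
    (h : r • b.coord i = s • b.coord j) : i = j := by
  by_contra hij
  have hri := LinearMap.congr_fun h (b i)
  simp [hij, hr] at hri

/-- The basis of `span R s` formed by the elements of `s`, when these admit a dual family `φ` of
functionals on the span. -/
noncomputable def spanBasisOfDual (s : Set M) (φ : s → Dual R (Submodule.span R s))
    (hself : ∀ v : s, φ v ⟨v, Submodule.subset_span v.2⟩ = 1)
    (hne : Pairwise fun v w : s ↦ φ v ⟨w, Submodule.subset_span w.2⟩ = 0) :
    Basis s R (Submodule.span R s) :=
  Basis.mk (v := fun v : s ↦ ⟨v, Submodule.subset_span v.2⟩)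
    (LinearIndependent.of_pairwise_dual_eq_zero_one _ φ hne hself) (by
      rw [← Submodule.span_span_coe_preimage]
      exact Submodule.span_mono fun x hx ↦ ⟨⟨x, hx⟩, rfl⟩)

theorem spanBasisOfDual_apply {s : Set M} {φ : s → Dual R (Submodule.span R s)}
    (hself : ∀ v : s, φ v ⟨v, Submodule.subset_span v.2⟩ = 1)
    (hne : Pairwise fun v w : s ↦ φ v ⟨w, Submodule.subset_span w.2⟩ = 0) (v : s) :
    spanBasisOfDual s φ hself hne v = ⟨v, Submodule.subset_span v.2⟩ :=
  Basis.mk_apply _ _ v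

theorem spanBasisOfDual_coord {s : Set M} {φ : s → Dual R (Submodule.span R s)}
    (hself : ∀ v : s, φ v ⟨v, Submodule.subset_span v.2⟩ = 1)
    (hne : Pairwise fun v w : s ↦ φ v ⟨w, Submodule.subset_span w.2⟩ = 0) (v : s) :
    (spanBasisOfDual s φ hself hne).coord v = φ v := by
  refine (spanBasisOfDual s φ hself hne).ext fun w ↦ ?_
  rcases eq_or_ne v w with rfl | hvw
  · rw [spanBasisOfDual_apply hself hne, hself]
    exact Basis.mk_coord_apply_eq v
  · rw [spanBasisOfDual_apply hself hne, hne hvw]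
    exact Basis.mk_coord_apply_ne hvw.symm

end Coordinates

theorem eq_two_and_eq_one_of_mul_eq_two {m c : ℤ} (hm : Even m) (hc : 0 < c)
    (hmc : m * c = 2) : m = 2 ∧ c = 1 := by
  obtain ⟨k, rfl⟩ := hm
  have hkc : c * k = 1 := by linarith
  have hc1 : c = 1 := Int.eq_one_of_mul_eq_one_right hc.le hkc
  subst hc1
  omega

theorem exists_coord_eq_one_and_eq_two_smul {ι M : Type*} [AddCommGroup M] (b : Basis ι ℤ M)
    {f : M →ₗ[ℤ] ℤ} {x : M} (hx : f x = 2) (hnonneg : ∀ i, 0 ≤ f (b i))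
    (heven : ∀ i, Even (f (b i)))
    (hmult : ∀ i, 0 < b.coord i x → ∃ q : ℚ, ∀ y, (f y : ℚ) = q * (b.coord i y : ℚ)) :
    ∃ i, b.coord i x = 1 ∧ (∀ j, 0 < b.coord j x → j = i) ∧ f = (2 : ℤ) • b.coord i := by
  have hsmul : ∀ i, 0 < b.coord i x → f = (2 : ℤ) • b.coord i ∧ b.coord i x = 1 := by
    intro i hi
    obtain ⟨q, hq⟩ := hmult i hi
    have hf : f = f (b i) • b.coord i :=
      eq_smul_coord_of_map_eq_mul (φ := Int.castRingHom ℚ) Int.cast_injective b hq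
    have hprod : f (b i) * b.coord i x = 2 := (LinearMap.congr_fun hf x).symm.trans hx
    obtain ⟨htwo, hone⟩ := eq_two_and_eq_one_of_mul_eq_two (heven i) hi hprod
    exact ⟨htwo ▸ hf, hone⟩
  obtain ⟨i, hi⟩ := exists_coord_pos_of_apply_pos b hnonneg (hx ▸ two_pos)
  obtain ⟨hf, hone⟩ := hsmul i hi
  refine ⟨i, hone, fun j hj ↦ ?_, hf⟩
  exact index_eq_of_smul_coord_eq b two_ne_zero ((hsmul j hj).1.symm.trans hf)

section InnerProductSpace

variable {V : Type*} [NormedAddCommGroup V] [InnerProductSpace ℝ V]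

theorem cpair_self {α : V} (hα : α ≠ 0) : cpair α α = 2 :=
  mul_div_cancel_right₀ 2 (inner_self_ne_zero.mpr hα)

theorem BasedRootSystem.IsDominant.cpair_nonneg {R : BasedRootSystem V} {lam β : V}
    (hlam : R.IsDominant lam) (hβ : β ∈ R.S) : 0 ≤ cpair β lam := by
  obtain ⟨n, hn⟩ := hlam β hβ
  exact hn ▸ n.cast_nonneg

theorem aSet_eq_singleton {F : Finset V}
    {lsharp : V → (Submodule.span ℤ (F : Set V) →ₗ[ℤ] ℤ)}
    {α : V} {hα : α ∈ Submodule.span ℤ (F : Set V)} {lam : V} (hlam : lam ∈ F)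
    (hone : lsharp lam ⟨α, hα⟩ = 1)
    (huniq : ∀ mu ∈ F, lsharp mu ⟨α, hα⟩ = 1 → mu = lam) :
    aSet F lsharp ((2 : ℤ) • lsharp lam) α hα = {lsharp lam} := by
  refine Set.eq_singleton_iff_unique_mem.mpr ⟨⟨hone, .inl ⟨lam, hlam, rfl⟩⟩, ?_⟩
  rintro δ ⟨hδ, ⟨mu, hmu, rfl⟩ | ⟨mu, hmu, hmu_eq⟩⟩
  · rw [huniq mu hmu hδ]
  · have hmu_one : lsharp mu ⟨α, hα⟩ = 1 := by simp [← hmu_eq, hδ, hone]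
    rw [huniq mu hmu hmu_one, two_smul, sub_eq_iff_eq_add] at hmu_eq
    exact (add_left_cancel hmu_eq).symm

theorem aSet_singleton_general (F : Finset V)
    (lsharp : V → (Submodule.span ℤ (F : Set V) →ₗ[ℤ] ℤ))
    (hlsharp : ∀ lam ∈ F, ∀ mu, ∀ hmu : mu ∈ F,
      (mu = lam → lsharp lam ⟨mu, Submodule.subset_span (Finset.mem_coe.mpr hmu)⟩ = 1) ∧
      (mu ≠ lam → lsharp lam ⟨mu, Submodule.subset_span (Finset.mem_coe.mpr hmu)⟩ = 0))
    (α : V) (hα₀ : α ≠ 0) (hα : α ∈ Submodule.span ℤ (F : Set V))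
    (acheck : Submodule.span ℤ (F : Set V) →ₗ[ℤ] ℤ)
    (hacheck : ∀ x : Submodule.span ℤ (F : Set V), (acheck x : ℝ) = cpair α x)
    (hnonneg : ∀ lam ∈ F, 0 ≤ cpair α lam)
    (heven : ∀ lam ∈ F, ∃ n : ℤ, cpair α lam = (2 * n : ℤ))
    (hmult : ∀ lam ∈ F, 0 < lsharp lam ⟨α, hα⟩ →
      ∃ q : ℚ, ∀ x : Submodule.span ℤ (F : Set V), (acheck x : ℚ) = q * (lsharp lam x : ℚ)) :
    ∃ lam ∈ F, 0 < lsharp lam ⟨α, hα⟩ ∧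
      (∀ mu ∈ F, 0 < lsharp mu ⟨α, hα⟩ → mu = lam) ∧
      acheck = (2 : ℤ) • lsharp lam ∧
      aSet F lsharp acheck α hα = {lsharp lam} := by
  let b := spanBasisOfDual (F : Set V) (fun lam ↦ lsharp lam)
    (fun lam ↦ (hlsharp lam lam.2 lam lam.2).1 rfl)
    (fun lam mu hne ↦ (hlsharp lam lam.2 mu mu.2).2 (Subtype.coe_ne_coe.mpr hne.symm))
  have hb (lam) : (b lam : V) = lam := congrArg Subtype.val (spanBasisOfDual_apply _ _ lam)
  have hcoord (lam) : b.coord lam = lsharp lam := spanBasisOfDual_coord _ _ lam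
  have htwo : acheck ⟨α, hα⟩ = 2 := by
    exact_mod_cast (hacheck ⟨α, hα⟩).trans (cpair_self hα₀)
  have hb_cast (lam) : (acheck (b lam) : ℝ) = cpair α lam := by rw [hacheck, hb]
  have hb_nonneg (lam) : 0 ≤ acheck (b lam) := by
    exact_mod_cast hb_cast lam ▸ hnonneg lam lam.2
  have hb_even (lam) : Even (acheck (b lam)) := by
    obtain ⟨n, hn⟩ := heven lam lam.2
    rw [← hb_cast] at hn
    exact even_iff_exists_two_mul.mpr ⟨n, by exact_mod_cast hn⟩
  obtain ⟨⟨lam, hlam⟩, hone, huniq, rfl⟩ :=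
    exists_coord_eq_one_and_eq_two_smul b htwo hb_nonneg hb_even fun mu ↦ by
      simpa only [hcoord] using hmult mu mu.2
  simp only [hcoord, Subtype.forall, Subtype.mk.injEq] at hone huniq ⊢
  exact ⟨lam, hlam, hone ▸ one_pos, huniq, rfl,
    aSet_eq_singleton hlam hone fun mu hmu hmu_one ↦ huniq mu hmu (hmu_one ▸ one_pos)⟩

end InnerProductSpace

/-- Let `α` be a simple root with `α ∈ ℤΓ` such that: (i) `⟨α^∨, λ⟩` is even
for every `λ ∈ F`; (ii) for every `λ ∈ F` with `λ^#(2α) > 0`, the restriction `α^∨|_{ℤΓ}` is a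
positive rational multiple of `λ^#`.  Then there is a unique `λ ∈ F` with `λ^#(α) > 0`,
`α^∨|_{ℤΓ} = 2λ^#`, and `a(α) = {λ^#}` has exactly one element. -/
theorem aSet_singleton {V : Type*} [NormedAddCommGroup V] [InnerProductSpace ℝ V]
    [FiniteDimensional ℝ V] (R : BasedRootSystem V) (F : Finset V)
    (hFdom : ∀ lam ∈ F, R.IsDominant lam)
    (hFindep : LinearIndependent ℝ (Subtype.val : ↥(F : Set V) → V))
    (lsharp : V → (Submodule.span ℤ (F : Set V) →ₗ[ℤ] ℤ))
    (hlsharp : ∀ lam ∈ F, ∀ mu, ∀ hmu : mu ∈ F,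
      (mu = lam → lsharp lam ⟨mu, Submodule.subset_span (Finset.mem_coe.mpr hmu)⟩ = 1) ∧
      (mu ≠ lam → lsharp lam ⟨mu, Submodule.subset_span (Finset.mem_coe.mpr hmu)⟩ = 0))
    (α : V) (hαS : α ∈ R.S) (hα : α ∈ Submodule.span ℤ (F : Set V))
    (acheck : Submodule.span ℤ (F : Set V) →ₗ[ℤ] ℤ)
    (hacheck : ∀ x : Submodule.span ℤ (F : Set V), (acheck x : ℝ) = cpair α x)
    (heven : ∀ lam ∈ F, ∃ n : ℤ, cpair α lam = (2 * n : ℤ))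
    (hmult : ∀ lam ∈ F, 0 < lsharp lam ((2 : ℤ) • (⟨α, hα⟩ : Submodule.span ℤ (F : Set V))) →
      ∃ q : ℚ, 0 < q ∧ ∀ x : Submodule.span ℤ (F : Set V),
        (acheck x : ℚ) = q * (lsharp lam x : ℚ)) :
    ∃ lam ∈ F, 0 < lsharp lam ⟨α, hα⟩ ∧
      (∀ mu ∈ F, 0 < lsharp mu ⟨α, hα⟩ → mu = lam) ∧
      acheck = (2 : ℤ) • lsharp lam ∧
      aSet F lsharp acheck α hα = {lsharp lam} :=
  aSet_singleton_general F lsharp hlsharp α (R.ne_zero α (R.base_subset hαS)) hα acheck hacheck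
    (fun lam hlam ↦ (hFdom lam hlam).cpair_nonneg hαS) heven
    fun lam hlam hpos ↦ (hmult lam hlam (by rw [map_smul]; positivity)).imp fun _ ↦ And.right
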